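/- arXiv:2003.14122 — 6 statements merged into one kernel-verified Lean document; each statement's English description precedes it below -/
import Mathlib

section
/- For every n : ℕ, every coefficient function c : (Fin n → Bool) → Bool, every x ∈ (Fin n → Bool), and every q ∈ Bool, the product (composition) over all u with c(u) = true of the gates C_u sends the basis state (x, q) to (x, q XOR f(x)), where f(x) = XOR over all u of (c(u) AND m_u(x)). In other words, the circuit Φ(f) corresponding to the ANF of a Boolean function f satisfies Φ(f)(x, q) = (x, q XOR f(x)) for all x and q. -/
/-- The Boolean monomial: `m_u(x) = true` iff `x i = true` for every `i` with `u i = true`. -/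
def mGate (n : ℕ) (u x : Fin n → Bool) : Bool :=
  decide (∀ i, u i = true → x i = true)

/-- The action of the multi-controlled X gate `C_u` on basis states:
`(x, q) ↦ (x, q XOR m_u(x))`. -/
def gateFun (n : ℕ) (u : Fin n → Bool) :
    (Fin n → Bool) × Bool → (Fin n → Bool) × Bool :=
  fun p => (p.1, xor p.2 (mGate n u p.1))

lemma gateFun_invol (n : ℕ) (u : Fin n → Bool) : Function.Involutive (gateFun n u) := by
  intro p; simp [gateFun, Bool.xor_assoc]

/-- The multi-controlled X gate `C_u` as a permutation of `(Fin n → Bool) × Bool`. -/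
def gate (n : ℕ) (u : Fin n → Bool) : Equiv.Perm ((Fin n → Bool) × Bool) :=
  (gateFun_invol n u).toPerm

lemma gate_commute (n : ℕ) (u v : Fin n → Bool) : Commute (gate n u) (gate n v) := by
  unfold Commute SemiconjBy
  ext p
  · simp [gate, gateFun, Equiv.Perm.mul_apply]
  · simp [gate, gateFun, Equiv.Perm.mul_apply, Bool.xor_assoc,
      Bool.xor_comm (mGate n v p.1)]

/-- The product (composition) of the gates `C_u` over a finite set `S` of indices;
since the gates pairwise commute, it is independent of the order of composition. -/
def prodGates (n : ℕ) (S : Finset (Fin n → Bool)) : Equiv.Perm ((Fin n → Bool) × Bool) :=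
  S.noncommProd (gate n) (fun a _ b _ _ => gate_commute n a b)

instance : Std.Commutative (α := Bool) xor := ⟨Bool.xor_comm⟩
instance : Std.Associative (α := Bool) xor := ⟨Bool.xor_assoc⟩

/-- XOR of the Boolean values `f a` over a finite set `s`. -/
def xorSum {α : Type*} (s : Finset α) (f : α → Bool) : Bool :=
  s.fold xor false f

lemma prodGates_aux (n : ℕ) (c : (Fin n → Bool) → Bool) (x : Fin n → Bool) (q : Bool)
    (s : Finset (Fin n → Bool)) :
    prodGates n (s.filter fun u => c u = true) (x, q) =
      (x, xor q (xorSum s fun u : Fin n → Bool => c u && mGate n u x)) := by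
  classical
  induction s using Finset.induction_on with
  | empty => simp [prodGates, xorSum]
  | insert a s ha ih =>
    have hx : xorSum (insert a s) (fun u : Fin n → Bool => c u && mGate n u x) =
        xor (c a && mGate n a x) (xorSum s fun u : Fin n → Bool => c u && mGate n u x) := by
      unfold xorSum
      exact Finset.fold_insert ha
    rw [hx]
    by_cases hc : c a = true
    · have hn : a ∉ s.filter fun u => c u = true := by simp [ha]
      have hp : prodGates n ((insert a s).filter fun u => c u = true) =
          gate n a * prodGates n (s.filter fun u => c u = true) := by
        rw [Finset.filter_insert, if_pos hc]
        unfold prodGates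
        exact Finset.noncommProd_insert_of_notMem _ _ _ _ hn
      rw [hp, Equiv.Perm.mul_apply, ih]
      simp [gate, gateFun, hc, Bool.xor_assoc, Bool.xor_comm (mGate n a x)]
    · rw [Finset.filter_insert, if_neg hc, ih]
      simp [hc]

/-- the product of the gates `C_u` over all `u` with `c u = true` sends the
basis state `(x, q)` to `(x, q XOR f(x))`, where `f(x)` is the XOR over all `u` of
`c u AND m_u(x)`; i.e. the circuit `Φ(f)` of the ANF of `f` computes `f` on the read-out. -/
theorem prodGates_apply (n : ℕ) (c : (Fin n → Bool) → Bool)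
    (x : Fin n → Bool) (q : Bool) :
    prodGates n (Finset.univ.filter fun u => c u = true) (x, q) =
      (x, xor q (xorSum Finset.univ fun u : Fin n → Bool => c u && mGate n u x)) := by
  exact prodGates_aux n c x q Finset.univ
end

section
/- For every n : ℕ, the subgroup of the permutation group of (Fin n → Bool) × Bool generated by the 2^n gates {C_u | u ∈ (Fin n → Bool)} has exactly 2^(2^n) elements; equivalently, the map sending a subset S ⊆ (Fin n → Bool) to the permutation ∏_{u ∈ S} C_u is a bijection from subsets of (Fin n → Bool) onto this subgroup. -/
lemma prodGates_insert (n : ℕ) (S : Finset (Fin n → Bool)) (u : Fin n → Bool) (h : u ∉ S) :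
    prodGates n (insert u S) = gate n u * prodGates n S := by
  unfold prodGates
  exact Finset.noncommProd_insert_of_notMem _ _ _ _ h

lemma prodGates_empty (n : ℕ) : prodGates n ∅ = 1 := by
  exact Finset.noncommProd_empty _ _

lemma gate_mul_self (n : ℕ) (u : Fin n → Bool) : gate n u * gate n u = 1 := by
  ext1 p
  exact gateFun_invol n u p

lemma gate_inv (n : ℕ) (u : Fin n → Bool) : (gate n u)⁻¹ = gate n u :=
  inv_eq_of_mul_eq_one_left (gate_mul_self n u)

lemma gate_mul_prodGates (n : ℕ) (S : Finset (Fin n → Bool)) (u : Fin n → Bool) :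
    ∃ T, prodGates n T = gate n u * prodGates n S := by
  by_cases h : u ∈ S
  · refine ⟨S.erase u, ?_⟩
    have := prodGates_insert n (S.erase u) u (Finset.notMem_erase u S)
    rw [Finset.insert_erase h] at this
    rw [this, ← mul_assoc, gate_mul_self, one_mul]
  · exact ⟨insert u S, prodGates_insert n S u h⟩

lemma mGate_iff (n : ℕ) (u x : Fin n → Bool) : mGate n u x = true ↔ u ≤ x := by
  simp only [mGate, decide_eq_true_eq, Pi.le_def]
  exact forall_congr' fun i => by cases u i <;> cases x i <;> simp

open Classical in
lemma prodGates_apply_s10 (n : ℕ) (S : Finset (Fin n → Bool)) (x : Fin n → Bool) :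
    prodGates n S (x, false) = (x, decide (Odd (S.filter (fun u => u ≤ x)).card)) := by
  induction S using Finset.induction_on with
  | empty => simp [prodGates_empty]
  | insert u S h ih =>
    rw [prodGates_insert n S u h, Equiv.Perm.mul_apply, ih, Finset.filter_insert]
    change (x, xor _ (mGate n u x)) = _
    have hm := mGate_iff n u x
    by_cases hu : u ≤ x
    · rw [if_pos hu, Finset.card_insert_of_notMem (by simp [h]), hm.2 hu]
      simp [Nat.odd_add_one, ← Nat.not_odd_iff_even]
    · rw [if_neg hu]
      have : mGate n u x = false := by simpa using mt hm.1 hu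
      simp [this]

open Classical in
lemma odd_split (n : ℕ) (S : Finset (Fin n → Bool)) (x : Fin n → Bool) :
    (S.filter (fun u => u ≤ x)).card =
      (S.filter (fun u => u < x)).card + if x ∈ S then 1 else 0 := by
  by_cases h : x ∈ S
  · have : S.filter (fun u => u ≤ x) = insert x (S.filter (fun u => u < x)) := by
      ext v
      simp only [Finset.mem_filter, Finset.mem_insert, le_iff_eq_or_lt]
      constructor
      · tauto
      · rintro (rfl | h') <;> tauto
    rw [this, Finset.card_insert_of_notMem (by simp), if_pos h]
  · rw [if_neg h, add_zero]
    congr 1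
    apply Finset.filter_congr
    intro v hv
    have : v ≠ x := fun e => h (e ▸ hv)
    exact ⟨fun h' => lt_of_le_of_ne h' this, le_of_lt⟩

open Classical in
lemma prodGates_injective (n : ℕ) :
    Function.Injective (fun S : Finset (Fin n → Bool) => prodGates n S) := by
  intro S T hST
  have hST : prodGates n S = prodGates n T := hST
  ext x
  induction x using WellFoundedLT.induction with
  | ind x ih =>
    have h1 := congrArg (fun g => (g (x, false)).2) hST
    simp only [prodGates_apply_s10, decide_eq_decide] at h1
    rw [odd_split, odd_split] at h1
    have : S.filter (fun u => u < x) = T.filter (fun u => u < x) := by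
      ext v
      simp only [Finset.mem_filter]
      exact and_congr_left fun hv => ih v hv
    rw [this] at h1
    by_cases hS : x ∈ S <;> by_cases hT : x ∈ T <;>
      simp [hS, hT, Nat.odd_add_one, ← Nat.not_odd_iff_even] at h1 ⊢

lemma prodGates_mem (n : ℕ) (S : Finset (Fin n → Bool)) :
    prodGates n S ∈ Subgroup.closure (Set.range (gate n)) := by
  induction S using Finset.induction_on with
  | empty => rw [prodGates_empty]; exact one_mem _
  | insert u S h ih =>
    rw [prodGates_insert n S u h]
    exact mul_mem (Subgroup.subset_closure ⟨u, rfl⟩) ih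

lemma prodGates_surj (n : ℕ) (g : Equiv.Perm ((Fin n → Bool) × Bool))
    (hg : g ∈ Subgroup.closure (Set.range (gate n))) :
    ∃ S : Finset (Fin n → Bool), prodGates n S = g := by
  induction hg using Subgroup.closure_induction_left with
  | one => exact ⟨∅, prodGates_empty n⟩
  | mul_left a ha y hy ih =>
    obtain ⟨u, rfl⟩ := ha
    obtain ⟨S, rfl⟩ := ih
    exact gate_mul_prodGates n S u
  | inv_mul_cancel a ha y hy ih =>
    obtain ⟨u, rfl⟩ := ha
    obtain ⟨S, rfl⟩ := ih
    rw [gate_inv]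
    exact gate_mul_prodGates n S u

/-- the subgroup generated by the `2^n` gates `{C_u}` has exactly `2^(2^n)`
elements; equivalently, `S ↦ ∏_{u ∈ S} C_u` is a bijection from the subsets of
`Fin n → Bool` onto this subgroup. -/
theorem closure_card_and_bijection (n : ℕ) :
    Nat.card (Subgroup.closure (Set.range (gate n))) = 2 ^ (2 ^ n) ∧
    Function.Injective (fun S : Finset (Fin n → Bool) => prodGates n S) ∧
    (∀ S : Finset (Fin n → Bool), prodGates n S ∈ Subgroup.closure (Set.range (gate n))) ∧
    (∀ g ∈ Subgroup.closure (Set.range (gate n)),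
      ∃ S : Finset (Fin n → Bool), prodGates n S = g) := by
  refine ⟨?_, prodGates_injective n, prodGates_mem n, prodGates_surj n⟩
  have hb : Function.Bijective (fun S : Finset (Fin n → Bool) =>
      (⟨prodGates n S, prodGates_mem n S⟩ : Subgroup.closure (Set.range (gate n)))) := by
    constructor
    · intro S T h
      exact prodGates_injective n (congrArg Subtype.val h)
    · rintro ⟨g, hg⟩
      obtain ⟨S, hS⟩ := prodGates_surj n g hg
      exact ⟨S, Subtype.ext hS⟩
  rw [← Nat.card_congr (Equiv.ofBijective _ hb)]
  simp
end

section
/- For every n : ℕ, every target function f : (Fin n → Bool) → Bool, and every k ≥ 1: for all u ∈ (Fin n → Bool) with w_H(u) ≤ k − 1 and all s ≥ k, the learning algorithm's coefficients satisfy g^(s)(u) = g^(k)(u). That is, after the k-th update, the gates controlled by at most k − 1 qubits are never updated again. -/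
/-- The Hamming weight `w_H(u) = |1_u|` of a bit string. -/
def hammingWeight (n : ℕ) (u : Fin n → Bool) : ℕ :=
  (Finset.univ.filter fun i => u i = true).card

/-- The output `h_g(x)` of the network with coefficient function `g`:
the XOR over all `u` of `g u AND m_u(x)`. -/
def netOut (n : ℕ) (g : (Fin n → Bool) → Bool) (x : Fin n → Bool) : Bool :=
  xorSum Finset.univ fun u : Fin n → Bool => g u && mGate n u x

/-- The sequence of coefficient functions produced by the learning algorithm for the
target function `f`: `g⁽⁰⁾` is constant false, and `g⁽ᵏ⁺¹⁾` flips `g⁽ᵏ⁾` exactly on the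
erroneous inputs `E⁽ᵏ⁾ = {x | h_{g⁽ᵏ⁾}(x) ≠ f(x)}`. -/
def gSeq (n : ℕ) (f : (Fin n → Bool) → Bool) : ℕ → ((Fin n → Bool) → Bool)
  | 0 => fun _ => false
  | k + 1 => fun u =>
      if netOut n (gSeq n f k) u ≠ f u then !(gSeq n f k u) else gSeq n f k u

theorem netOut_update_aux (n : ℕ) (g g' : (Fin n → Bool) → Bool) (x : Fin n → Bool)
    (h : ∀ u, u ≠ x → mGate n u x = true → g' u = g u) :
    netOut n g' x = xor (netOut n g x) (xor (g x) (g' x)) := by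
  classical
  have hx : mGate n x x = true := by simp [mGate]
  have key : ∀ G : (Fin n → Bool) → Bool, netOut n G x =
      xor (G x) (xorSum (Finset.univ.erase x) fun u => G u && mGate n u x) := by
    intro G
    unfold netOut xorSum
    rw [← Finset.insert_erase (Finset.mem_univ x),
      Finset.fold_insert (Finset.notMem_erase x _)]
    simp [hx]
  have e : (xorSum (Finset.univ.erase x) fun u => g' u && mGate n u x)
      = xorSum (Finset.univ.erase x) fun u => g u && mGate n u x := by
    unfold xorSum
    apply Finset.fold_congr
    intro u hu
    cases hm : mGate n u x with
    | false => simp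
    | true => rw [h u (Finset.ne_of_mem_erase hu) hm]
  rw [key g, key g', e]
  cases g x <;> cases g' x <;> simp

theorem weight_lt_aux (n : ℕ) (u x : Fin n → Bool) (hne : u ≠ x)
    (hm : mGate n u x = true) : hammingWeight n u < hammingWeight n x := by
  have hm' : ∀ i, u i = true → x i = true := by simpa [mGate] using hm
  unfold hammingWeight
  apply Finset.card_lt_card
  rw [Finset.ssubset_iff_subset_ne]
  refine ⟨fun i hi => ?_, fun he => hne ?_⟩
  · simp only [Finset.mem_filter, Finset.mem_univ, true_and] at hi ⊢
    exact hm' i hi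
  · funext i
    have := Finset.ext_iff.1 he i
    simp only [Finset.mem_filter, Finset.mem_univ, true_and] at this
    exact Bool.eq_iff_iff.2 this

theorem netOut_correct_aux (n : ℕ) (f : (Fin n → Bool) → Bool) (k : ℕ) :
    ∀ x, hammingWeight n x < k → netOut n (gSeq n f k) x = f x := by
  induction k with
  | zero => intro x hx; omega
  | succ k ih =>
    intro x hx
    rw [netOut_update_aux n (gSeq n f k) (gSeq n f (k+1)) x]
    · simp only [gSeq]
      cases netOut n (gSeq n f k) x <;> cases f x <;> simp
    · intro u hne hm
      have := weight_lt_aux n u x hne hm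
      simp [gSeq, ih u (by omega)]

/-- after the `k`-th update (`k ≥ 1`), the gates controlled by at most
`k - 1` qubits are never updated again: for `w_H(u) ≤ k - 1` and `s ≥ k`,
`g⁽ˢ⁾(u) = g⁽ᵏ⁾(u)`. -/
theorem low_weight_gates_stable (n : ℕ) (f : (Fin n → Bool) → Bool)
    (k : ℕ) (hk : 1 ≤ k) (u : Fin n → Bool) (hu : hammingWeight n u ≤ k - 1)
    (s : ℕ) (hs : k ≤ s) :
    gSeq n f s u = gSeq n f k u := by
  induction s, hs using Nat.le_induction with
  | base => rfl
  | succ s hs ih =>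
    rw [← ih]
    simp [gSeq, netOut_correct_aux n f s u (by omega)]
end

section
/- For every n : ℕ, every target function f : (Fin n → Bool) → Bool, and every k ≥ 1, the set of erroneous inputs after the k-th update satisfies E^(k) ⊆ {x ∈ (Fin n → Bool) | w_H(x) ≥ k}. -/
theorem aux_fold_add {α : Type*} (s : Finset α) (a b : α → Bool) :
    xorSum s (fun u => xor (a u) (b u)) = xor (xorSum s a) (xorSum s b) := by
  classical
  unfold xorSum
  have h := Finset.fold_op_distrib (op := xor) (f := a) (g := b) (s := s)
    (b₁ := false) (b₂ := false)
  simpa using h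

theorem aux_fold_single {α : Type*} [DecidableEq α] (s : Finset α) (x : α) (c : Bool) :
    xorSum s (fun u => decide (u = x) && c) = (decide (x ∈ s) && c) := by
  unfold xorSum
  induction s using Finset.induction_on with
  | empty => simp
  | insert a s ha ih =>
    rw [Finset.fold_insert ha, ih]
    by_cases h : a = x
    · subst h; simp [ha]
    · have h' : ¬ x = a := fun e => h e.symm
      simp [h, h']

theorem aux_main (n : ℕ) (f : (Fin n → Bool) → Bool) (k : ℕ) (x : Fin n → Bool) :
    netOut n (gSeq n f k) x ≠ f x → k ≤ hammingWeight n x := by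
  induction k generalizing x with
  | zero => intro _; exact Nat.zero_le _
  | succ k ih =>
    intro hx
    by_contra hw
    apply hx
    have h1 : netOut n (gSeq n f (k+1)) x =
        xor (netOut n (gSeq n f k) x) (xor (netOut n (gSeq n f k) x) (f x)) := by
      have h2 : (fun u : Fin n → Bool => gSeq n f (k+1) u && mGate n u x) =
          fun u => xor (gSeq n f k u && mGate n u x)
            (decide (u = x) && xor (netOut n (gSeq n f k) x) (f x)) := by
        funext u
        by_cases hu : u = x
        · subst hu
          have : mGate n u u = true := by simp [mGate]
          simp only [gSeq, this]
          cases netOut n (gSeq n f k) u <;> cases f u <;> simp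
        · by_cases he : netOut n (gSeq n f k) u = f u
          · simp [gSeq, he, hu]
          · have hm : mGate n u x = false := by
              unfold mGate
              rw [decide_eq_false_iff_not]
              intro hs
              have hk := ih u he
              have hsub : (Finset.univ.filter fun i => u i = true) ⊆
                  (Finset.univ.filter fun i => x i = true) := by
                intro i; simpa using hs i
              have heq := Finset.eq_of_subset_of_card_le hsub (by
                unfold hammingWeight at hk hw; omega)
              apply hu
              funext i
              have := Finset.ext_iff.mp heq i
              simp only [Finset.mem_filter, Finset.mem_univ, true_and] at this
              exact Bool.eq_iff_iff.mpr this
            simp [hm, hu]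
      conv_lhs => unfold netOut
      rw [h2, aux_fold_add, aux_fold_single]
      simp [netOut]
    rw [h1]
    simp

/-- for `k ≥ 1`, the erroneous inputs after the `k`-th update satisfy
`E⁽ᵏ⁾ ⊆ {x | w_H(x) ≥ k}`. -/
theorem errors_have_high_weight (n : ℕ) (f : (Fin n → Bool) → Bool)
    (k : ℕ) (hk : 1 ≤ k) :
    {x : Fin n → Bool | netOut n (gSeq n f k) x ≠ f x} ⊆
      {x : Fin n → Bool | k ≤ hammingWeight n x} := by
  intro x hx
  exact aux_main n f k x hx
end

section
/- For every n : ℕ and every target function f : (Fin n → Bool) → Bool, the coefficient function g^(n+1) produced by the learning algorithm after n + 1 updates is exactly the ANF coefficient function of f: h_{g^(n+1)} = f, and g^(n+1) is the unique coefficient function c satisfying h_c = f. -/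
def lowPart (n : ℕ) (g : (Fin n → Bool) → Bool) (x : Fin n → Bool) : Bool :=
  xorSum (Finset.univ.erase x) fun u : Fin n → Bool => g u && mGate n u x

lemma netOut_eq (n : ℕ) (g : (Fin n → Bool) → Bool) (x : Fin n → Bool) :
    netOut n g x = xor (g x) (lowPart n g x) := by
  unfold netOut lowPart xorSum
  rw [← Finset.insert_erase (Finset.mem_univ x), Finset.fold_insert (Finset.notMem_erase _ _)]
  simp [mGate]

lemma weight_lt (n : ℕ) (u x : Fin n → Bool) (hne : u ≠ x)
    (h : ∀ i, u i = true → x i = true) : hammingWeight n u < hammingWeight n x := by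
  unfold hammingWeight
  apply Finset.card_lt_card
  rw [Finset.ssubset_iff_subset_ne]
  refine ⟨fun i hi => by simpa using h i (by simpa using hi), fun he => hne ?_⟩
  funext i
  have := Finset.ext_iff.1 he i
  simp only [Finset.mem_filter, Finset.mem_univ, true_and] at this
  exact Bool.eq_iff_iff.2 this

lemma lowPart_congr (n : ℕ) (g g' : (Fin n → Bool) → Bool) (x : Fin n → Bool)
    (h : ∀ u, hammingWeight n u < hammingWeight n x → g u = g' u) :
    lowPart n g x = lowPart n g' x := by
  unfold lowPart xorSum
  apply Finset.fold_congr
  intro u hu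
  by_cases hm : ∀ i, u i = true → x i = true
  · rw [h u (weight_lt n u x (Finset.ne_of_mem_erase hu) hm)]
  · simp [mGate, hm]

lemma gSeq_succ (n : ℕ) (f : (Fin n → Bool) → Bool) (k : ℕ) (x : Fin n → Bool) :
    gSeq n f (k + 1) x = xor (lowPart n (gSeq n f k) x) (f x) := by
  rw [gSeq]
  beta_reduce
  rw [netOut_eq]
  cases gSeq n f k x <;> cases lowPart n (gSeq n f k) x <;> cases f x <;> rfl

lemma gSeq_stable (n : ℕ) (f : (Fin n → Bool) → Bool) (k : ℕ) :
    ∀ x, hammingWeight n x < k → gSeq n f (k + 1) x = gSeq n f k x := by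
  induction k with
  | zero => intro x hx; omega
  | succ k ih =>
    intro x hx
    rw [gSeq_succ n f (k + 1), gSeq_succ n f k,
      lowPart_congr n _ _ x fun u hu => ih u (by omega)]

lemma anf_eq_gSeq (n : ℕ) (f c : (Fin n → Bool) → Bool) (hc : ∀ x, netOut n c x = f x) (k : ℕ) :
    ∀ x, hammingWeight n x < k → c x = gSeq n f k x := by
  induction k with
  | zero => intro x hx; omega
  | succ k ih =>
    intro x hx
    rw [gSeq_succ n f k, ← lowPart_congr n _ _ x fun u hu => ih u (by omega), ← hc x, netOut_eq]
    cases c x <;> cases lowPart n c x <;> rfl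

lemma weight_lt_succ (n : ℕ) (x : Fin n → Bool) : hammingWeight n x < n + 1 := by
  have := Finset.card_le_univ (Finset.univ.filter fun i => x i = true)
  rw [Fintype.card_fin] at this
  exact Nat.lt_succ_of_le this

/-- the coefficient function `g⁽ⁿ⁺¹⁾` produced after `n + 1` updates is
exactly the ANF coefficient function of `f`: `h_{g⁽ⁿ⁺¹⁾} = f`, and it is the unique
coefficient function `c` with `h_c = f`. -/
theorem learning_finds_anf (n : ℕ) (f : (Fin n → Bool) → Bool) :
    (∀ x : Fin n → Bool, netOut n (gSeq n f (n + 1)) x = f x) ∧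
    (∀ c : (Fin n → Bool) → Bool,
      (∀ x : Fin n → Bool, netOut n c x = f x) → c = gSeq n f (n + 1)) := by
  refine ⟨fun x => ?_, fun c hc => funext fun x => anf_eq_gSeq n f c hc _ x (weight_lt_succ n x)⟩
  have h := gSeq_stable n f (n + 1) x (weight_lt_succ n x)
  rw [gSeq_succ] at h
  rw [netOut_eq, ← h]
  cases lowPart n (gSeq n f (n + 1)) x <;> cases f x <;> rfl
end

section
/- For every n ≥ 1 and every x ∈ (Fin n → Bool), writing x₁₀ = ∑_{j=0}^{n-1} x_j · 2^(n-1-j) for the decimal value of the bit string x (x_j ∈ {0,1}), the product over j = 0,…,n−1 of (cos θ_{n-1-j} if x_j = 0, and sin θ_{n-1-j} if x_j = 1), where θ_m = arccos(√(2^(2^m)/(2^(2^m)+1))), equals √(2^(2^n − 1 − x₁₀)/(2^(2^n) − 1)). In particular, the tensor product U_↓ = R_y(2θ_{n-1}) ⊗ ⋯ ⊗ R_y(2θ_0) applied to |0⟩^⊗n produces the state ∑_{x} √(2^(2^n−1−x₁₀)/(2^(2^n)−1)) |x⟩. -/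
/-- The rotation angle `θ_m = arccos √(2^(2^m)/(2^(2^m)+1))`. -/
noncomputable def theta (m : ℕ) : ℝ :=
  Real.arccos (Real.sqrt ((2 : ℝ) ^ (2 ^ m) / ((2 : ℝ) ^ (2 ^ m) + 1)))

/-- The decimal value `x₁₀ = ∑_j x_j · 2^(n−1−j)` of a bit string `x : Fin n → Bool`. -/
def toDecimal (n : ℕ) (x : Fin n → Bool) : ℕ :=
  ∑ j : Fin n, if x j then 2 ^ (n - 1 - (j : ℕ)) else 0

theorem cos_theta (m : ℕ) :
    Real.cos (theta m) = Real.sqrt ((2 : ℝ) ^ (2 ^ m) / ((2 : ℝ) ^ (2 ^ m) + 1)) := by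
  have hp : (0 : ℝ) < (2 : ℝ) ^ (2 ^ m) := by positivity
  unfold theta
  rw [Real.cos_arccos]
  · linarith [Real.sqrt_nonneg ((2 : ℝ) ^ (2 ^ m) / ((2 : ℝ) ^ (2 ^ m) + 1))]
  · rw [Real.sqrt_le_iff, one_pow, div_le_one (by linarith)]
    refine ⟨zero_le_one, ?_⟩
    linarith

theorem sin_theta (m : ℕ) :
    Real.sin (theta m) = Real.sqrt (1 / ((2 : ℝ) ^ (2 ^ m) + 1)) := by
  have hp : (0 : ℝ) < (2 : ℝ) ^ (2 ^ m) := by positivity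
  unfold theta
  rw [Real.sin_arccos, Real.sq_sqrt (by positivity)]
  congr 1
  field_simp
  ring

theorem toDecimal_succ (n : ℕ) (x : Fin (n + 1) → Bool) :
    toDecimal (n + 1) x = (if x 0 then 2 ^ n else 0) + toDecimal n (fun j => x j.succ) := by
  unfold toDecimal
  rw [Fin.sum_univ_succ]
  congr 1
  refine Finset.sum_congr rfl fun j _ => ?_
  have : n + 1 - 1 - ((j.succ : Fin (n + 1)) : ℕ) = n - 1 - (j : ℕ) := by
    simp only [Fin.val_succ]; omega
  rw [this]

theorem toDecimal_lt (n : ℕ) (x : Fin n → Bool) : toDecimal n x < 2 ^ n := by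
  induction n with
  | zero => simp [toDecimal]
  | succ n ih =>
    rw [toDecimal_succ, pow_succ]
    have := ih (fun j => x j.succ)
    split_ifs <;> omega

theorem amplitude_aux (n : ℕ) (x : Fin n → Bool) :
    (∏ j : Fin n,
        if x j then Real.sin (theta (n - 1 - (j : ℕ)))
        else Real.cos (theta (n - 1 - (j : ℕ)))) =
      Real.sqrt ((2 : ℝ) ^ (2 ^ n - 1 - toDecimal n x) / ((2 : ℝ) ^ (2 ^ n) - 1)) := by
  induction n with
  | zero => norm_num [toDecimal]
  | succ n ih =>
    rw [Fin.prod_univ_succ]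
    have h := ih (fun j => x j.succ)
    have e : ∀ j : Fin n, n + 1 - 1 - ((j.succ : Fin (n + 1)) : ℕ) = n - 1 - (j : ℕ) := by
      intro j
      simp only [Fin.val_succ]; omega
    simp only [e]
    rw [h, toDecimal_succ]
    have hlt := toDecimal_lt n (fun j => x j.succ)
    generalize toDecimal n (fun j => x j.succ) = d at hlt
    have h1 : (1 : ℝ) < (2 : ℝ) ^ (2 ^ n) := one_lt_pow₀ (by norm_num) (by positivity)
    have h2 : (2 : ℝ) ^ (2 ^ (n + 1)) - 1 = ((2 : ℝ) ^ (2 ^ n) + 1) * ((2 : ℝ) ^ (2 ^ n) - 1) := by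
      rw [pow_succ 2 n, pow_mul]; ring
    have h3 : n + 1 - 1 - ((0 : Fin (n + 1)) : ℕ) = n := by simp
    rw [h2, h3, cos_theta, sin_theta]
    split_ifs with hx
    · have h4 : 2 ^ (n + 1) - 1 - (2 ^ n + d) = 2 ^ n - 1 - d := by
        rw [pow_succ]; omega
      rw [h4, ← Real.sqrt_mul (by positivity), div_mul_div_comm, one_mul]
    · have h4 : 2 ^ (n + 1) - 1 - (0 + d) = 2 ^ n + (2 ^ n - 1 - d) := by
        rw [pow_succ]; omega
      rw [h4, ← Real.sqrt_mul (by positivity), div_mul_div_comm, pow_add]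

/-- for `n ≥ 1` and `x : Fin n → Bool`, the amplitude produced by
`U_↓ = R_y(2θ_{n−1}) ⊗ ⋯ ⊗ R_y(2θ_0)` on the basis state `|x⟩`, namely the product over
`j` of `cos θ_{n−1−j}` if `x_j = 0` and `sin θ_{n−1−j}` if `x_j = 1`, equals
`√(2^(2^n − 1 − x₁₀) / (2^(2^n) − 1))`. -/
theorem amplitude_formula (n : ℕ) (hn : 1 ≤ n) (x : Fin n → Bool) :
    (∏ j : Fin n,
        if x j then Real.sin (theta (n - 1 - (j : ℕ)))
        else Real.cos (theta (n - 1 - (j : ℕ)))) =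
      Real.sqrt ((2 : ℝ) ^ (2 ^ n - 1 - toDecimal n x) / ((2 : ℝ) ^ (2 ^ n) - 1)) := by
  exact amplitude_aux n x
end
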